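/- The power graph of the symmetric group Sym(n) (the group of permutations of an n-element set) is chordal if and only if n ≤ 5. -/

import Mathlib

/-- The power graph of a group: distinct `x` and `y` are adjacent iff one is a power
of the other. -/
def powerGraph (G : Type*) [Group G] : SimpleGraph G :=
  SimpleGraph.fromRel (fun x y => x ∈ Subgroup.zpowers y)

/-- A graph is chordal if it has no induced cycle on at least 4 vertices. -/
def IsChordal {V : Type*} (Γ : SimpleGraph V) : Prop :=
  ∀ n : ℕ, 4 ≤ n → IsEmpty (SimpleGraph.cycleGraph n ↪g Γ)

/-!
A power graph is the comparability graph of a preorder, so along an induced cycle of length at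
least `4` local minima and local maxima alternate, and neighbouring minima are incomparable
elements of the cyclic group generated by the maximum between them. A cyclic group of prime power
order has no incomparable elements, and elements of `Sym(5)` have prime power order or order `6`;
hence in `Sym(5)` every local maximum has order `6`, and the local minima have orders `2` and `3`
alternately. The two maxima next to a minimum of order `2` have that minimum as their cube; but in
`Sym(5)` an element of order `6` is determined up to inversion by its cube, so these two maxima are
comparable, a contradiction.

In `Sym(6)`, the transpositions `(0 1)`, `(0 2)`, `(0 3)` and the `3`-cycles `(3 4 5)`, `(1 4 5)`,
`(2 4 5)` form a hexagon in which neighbours have disjoint supports. These six permutations and the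
six products of neighbours form an induced `12`-cycle.
-/

open Equiv Relation Subgroup

theorem not_incompRel_dvd_of_dvd_prime_pow {r k d e : ℕ} (hr : r.Prime) (hd : d ∣ r ^ k)
    (he : e ∣ r ^ k) : ¬ IncompRel (· ∣ ·) d e := by
  obtain ⟨i, -, rfl⟩ := (Nat.dvd_prime_pow hr).1 hd
  obtain ⟨j, -, rfl⟩ := (Nat.dvd_prime_pow hr).1 he
  exact fun h => (le_total i j).elim (fun hij => h.1 (pow_dvd_pow r hij))
    fun hji => h.2 (pow_dvd_pow r hji)

theorem eq_of_dvd_prime_mul_prime {p q n : ℕ} (hp : p.Prime) (hq : q.Prime) (hn : n ∣ p * q) :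
    n = 1 ∨ n = p ∨ n = q ∨ n = p * q := by
  obtain ⟨m, l, hm, hl, rfl⟩ := Nat.dvd_mul.1 hn
  rcases (Nat.dvd_prime hp).1 hm with rfl | rfl <;>
    rcases (Nat.dvd_prime hq).1 hl with rfl | rfl <;> simp

theorem eq_or_eq_of_incompRel_dvd_of_dvd_prime_mul_prime {p q d e : ℕ} (hp : p.Prime)
    (hq : q.Prime) (hd : d ∣ p * q) (he : e ∣ p * q) (h : IncompRel (· ∣ ·) d e) :
    (d = p ∧ e = q) ∨ (d = q ∧ e = p) := by
  rcases eq_of_dvd_prime_mul_prime hp hq hd with rfl | rfl | rfl | rfl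
  · exact absurd (one_dvd e) h.1
  · rcases eq_of_dvd_prime_mul_prime hp hq he with rfl | rfl | rfl | rfl
    · exact absurd (one_dvd _) h.2
    · exact absurd dvd_rfl h.1
    · exact Or.inl ⟨rfl, rfl⟩
    · exact absurd hd h.1
  · rcases eq_of_dvd_prime_mul_prime hp hq he with rfl | rfl | rfl | rfl
    · exact absurd (one_dvd _) h.2
    · exact Or.inr ⟨rfl, rfl⟩
    · exact absurd dvd_rfl h.1
    · exact absurd hd h.1
  · exact absurd he h.2

theorem nonempty_embedding_of_enatCard_le {α β : Type*} [Finite α]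
    (h : ENat.card α ≤ ENat.card β) : Nonempty (α ↪ β) := by
  rw [← Cardinal.lift_mk_le', ← Cardinal.toENat_le_iff_of_le_aleph0 (by simp),
    Cardinal.toENat_lift, Cardinal.toENat_lift]
  exact h

theorem IsChordal.of_embedding {V W : Type*} {Γ : SimpleGraph V} {Δ : SimpleGraph W}
    (hΔ : IsChordal Δ) (e : Γ ↪g Δ) : IsChordal Γ :=
  fun n hn => ⟨fun f => (hΔ n hn).false (f.trans e)⟩

open scoped Fin.CommRing in
theorem exists_seq_adj_of_not_isChordal {V : Type*} {Γ : SimpleGraph V} (h : ¬ IsChordal Γ) :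
    ∃ w : ℕ → V, (∀ i, Γ.Adj (w i) (w (i + 1))) ∧
      ∀ i, w i ≠ w (i + 2) ∧ ¬ Γ.Adj (w i) (w (i + 2)) := by
  simp only [IsChordal, not_forall, not_isEmpty_iff] at h
  obtain ⟨n, hn, ⟨f⟩⟩ := h
  obtain ⟨m, rfl⟩ := Nat.exists_eq_add_of_le' hn
  have cast_ne_zero (k : ℕ) (hpos : 0 < k) (hlt : k < 4) : (k : Fin (m + 4)) ≠ 0 := fun hk =>
    absurd (Nat.le_of_dvd hpos (Fin.natCast_eq_zero.1 hk)) (by omega)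
  refine ⟨fun i => f (i : Fin (m + 4)), fun i => ?_, fun i => ⟨fun heq => ?_, fun hadj => ?_⟩⟩
  · refine f.map_rel_iff.2 (SimpleGraph.cycleGraph_adj.2 (Or.inr ?_))
    push_cast
    ring
  · have hi := f.injective heq
    push_cast at hi
    exact cast_ne_zero 2 (by norm_num) (by norm_num) (by push_cast; linear_combination -hi)
  · have hi := SimpleGraph.cycleGraph_adj.1 (f.map_rel_iff.1 hadj)
    push_cast at hi
    rcases hi with hi | hi
    · exact cast_ne_zero 3 (by norm_num) (by norm_num) (by push_cast; linear_combination -hi)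
    · exact cast_ne_zero 1 (by norm_num) (by norm_num) (by push_cast; linear_combination hi)

theorem exists_alternating_of_symmGen_of_incompRel {α : Type*} {r : α → α → Prop} [IsTrans α r]
    {w : ℕ → α} (hcomp : ∀ i, SymmGen r (w i) (w (i + 1)))
    (hincomp : ∀ i, IncompRel r (w i) (w (i + 2))) :
    ∃ m, ∀ j, r (w (m + 2 * j)) (w (m + 2 * j + 1)) ∧
      r (w (m + 2 * j + 2)) (w (m + 2 * j + 1)) := by
  have turn_down (i) (h : r (w i) (w (i + 1))) : r (w (i + 2)) (w (i + 1)) :=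
    (hcomp (i + 1)).resolve_left fun h' => (hincomp i).1 (_root_.trans h h')
  have turn_up (i) (h : r (w (i + 1)) (w i)) : r (w (i + 1)) (w (i + 2)) :=
    (hcomp (i + 1)).resolve_right fun h' => (hincomp i).2 (_root_.trans h' h)
  obtain ⟨m, hm⟩ : ∃ m, r (w m) (w (m + 1)) :=
    (hcomp 0).elim (fun h => ⟨0, h⟩) fun h => ⟨1, turn_up 0 h⟩
  have ascent (j : ℕ) : r (w (m + 2 * j)) (w (m + 2 * j + 1)) := by
    induction j with
    | zero => exact hm
    | succ j ih => exact turn_up _ (turn_down _ ih)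
  exact ⟨m, fun j => ⟨ascent j, turn_down _ (ascent j)⟩⟩

section PowerGraph

variable {G H : Type*} [Group G] [Group H]

/-- The power preorder on a group, whose comparability graph is the power graph. -/
def IsPowerOf (x y : G) : Prop :=
  x ∈ zpowers y

instance : IsTrans G IsPowerOf :=
  ⟨fun _ _ _ hxy hyz => zpowers_le.2 hyz hxy⟩

theorem powerGraph_adj {x y : G} :
    (powerGraph G).Adj x y ↔ x ≠ y ∧ SymmGen IsPowerOf x y :=
  SimpleGraph.fromRel_adj _ _ _

theorem incompRel_isPowerOf_iff {x y : G} :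
    IncompRel IsPowerOf x y ↔ x ≠ y ∧ ¬ (powerGraph G).Adj x y := by
  rw [powerGraph_adj, ← not_symmGen_iff]
  refine ⟨fun h => ⟨?_, fun hadj => h hadj.2⟩, fun h hcomp => h.2 ⟨h.1, hcomp⟩⟩
  rintro rfl
  exact h (Or.inl (mem_zpowers x))

theorem isPowerOf_map_iff {φ : H →* G} (hφ : Function.Injective φ) {x y : H} :
    IsPowerOf (φ x) (φ y) ↔ IsPowerOf x y := by
  simp only [IsPowerOf, mem_zpowers_iff, ← map_zpow, hφ.eq_iff]

/-- An injective group homomorphism, as an embedding of power graphs. -/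
def powerGraphEmbedding (φ : H →* G) (hφ : Function.Injective φ) :
    powerGraph H ↪g powerGraph G where
  toFun := φ
  inj' := hφ
  map_rel_iff' := by
    simp [powerGraph_adj, SymmGen, isPowerOf_map_iff hφ, hφ.eq_iff]

theorem exists_alternating_of_not_isChordal_powerGraph (h : ¬ IsChordal (powerGraph G)) :
    ∃ a b : ℕ → G, ∀ i, IsPowerOf (a i) (b i) ∧ IsPowerOf (a (i + 1)) (b i) ∧
      IncompRel IsPowerOf (a i) (a (i + 1)) ∧ IncompRel IsPowerOf (b i) (b (i + 1)) := by
  obtain ⟨w, hadj, hnonadj⟩ := exists_seq_adj_of_not_isChordal h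
  have hincomp (i) : IncompRel IsPowerOf (w i) (w (i + 2)) := incompRel_isPowerOf_iff.2 (hnonadj i)
  obtain ⟨m, hm⟩ := exists_alternating_of_symmGen_of_incompRel
    (fun i => (powerGraph_adj.1 (hadj i)).2) hincomp
  exact ⟨fun i => w (m + 2 * i), fun i => w (m + 2 * i + 1), fun i =>
    ⟨(hm i).1, (hm i).2, hincomp _, hincomp _⟩⟩

theorem pow_isPowerOf_pow_iff {g : G} {i j : ℕ} :
    IsPowerOf (g ^ i) (g ^ j) ↔ j.gcd (orderOf g) ∣ i := by
  rw [IsPowerOf, mem_zpowers_iff, ← Int.gcd_natCast_natCast, Int.gcd_dvd_iff]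
  simp_rw [← zpow_natCast, ← zpow_mul, zpow_eq_zpow_iff_modEq, Int.modEq_iff_dvd, dvd_def,
    sub_eq_iff_eq_add']

theorem IsPowerOf.exists_pow_eq {x g : G} (h : IsPowerOf x g) (hg : IsOfFinOrder g) :
    ∃ k < orderOf g, g ^ k = x := by
  classical
  simpa using hg.mem_zpowers_iff_mem_range_orderOf.1 h

theorem isPowerOf_iff_of_pow_eq_one {n : ℕ} (hn : 0 < n) {x y : G} (hy : y ^ n = 1) :
    IsPowerOf x y ↔ ∃ k < n, y ^ k = x := by
  refine ⟨fun h => ?_, ?_⟩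
  · obtain ⟨k, hk, hkx⟩ := h.exists_pow_eq (isOfFinOrder_iff_pow_eq_one.2 ⟨n, hn, hy⟩)
    exact ⟨k, hk.trans_le (orderOf_le_of_pow_eq_one hn hy), hkx⟩
  · rintro ⟨k, -, rfl⟩
    exact npow_mem_zpowers y k

theorem isPowerOf_of_orderOf_dvd {x y g : G} (hg : IsOfFinOrder g) (hx : IsPowerOf x g)
    (hy : IsPowerOf y g) (hdvd : orderOf x ∣ orderOf y) : IsPowerOf x y := by
  obtain ⟨i, -, rfl⟩ := hx.exists_pow_eq hg
  obtain ⟨j, -, rfl⟩ := hy.exists_pow_eq hg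
  rw [hg.orderOf_pow, hg.orderOf_pow] at hdvd
  rw [pow_isPowerOf_pow_iff, Nat.gcd_comm]
  have hgcd : (orderOf g).gcd j ∣ (orderOf g).gcd i := by
    have hi := Nat.gcd_dvd_left (orderOf g) i
    rw [Nat.dvd_div_iff_mul_dvd (Nat.gcd_dvd_left _ _)] at hdvd
    refine Nat.dvd_of_mul_dvd_mul_right (Nat.div_pos (Nat.le_of_dvd hg.orderOf_pos hi)
      (Nat.gcd_pos_of_pos_left i hg.orderOf_pos)) ?_
    rwa [Nat.mul_div_cancel' hi]
  exact hgcd.trans (Nat.gcd_dvd_right _ _)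

theorem incompRel_orderOf {x y g : G} (hg : IsOfFinOrder g) (hx : IsPowerOf x g)
    (hy : IsPowerOf y g) (h : IncompRel IsPowerOf x y) :
    IncompRel (· ∣ ·) (orderOf x) (orderOf y) :=
  ⟨fun hdvd => h.1 (isPowerOf_of_orderOf_dvd hg hx hy hdvd),
    fun hdvd => h.2 (isPowerOf_of_orderOf_dvd hg hy hx hdvd)⟩

theorem orderOf_eq_of_incompRel_isPowerOf {p q : ℕ} (hp : p.Prime) (hq : q.Prime) {x y g : G}
    (hg : (∃ r k, r.Prime ∧ orderOf g = r ^ k) ∨ orderOf g = p * q)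
    (hx : IsPowerOf x g) (hy : IsPowerOf y g) (h : IncompRel IsPowerOf x y) :
    orderOf g = p * q ∧
      ((orderOf x = p ∧ orderOf y = q) ∨ (orderOf x = q ∧ orderOf y = p)) := by
  have hxg := orderOf_dvd_of_mem_zpowers hx
  have hyg := orderOf_dvd_of_mem_zpowers hy
  rcases hg with ⟨r, k, hr, hg⟩ | hg
  · have hfin : IsOfFinOrder g := orderOf_pos_iff.1 (hg ▸ pow_pos hr.pos k)
    exact absurd (incompRel_orderOf hfin hx hy h)
      (not_incompRel_dvd_of_dvd_prime_pow hr (hg ▸ hxg) (hg ▸ hyg))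
  · have hfin : IsOfFinOrder g := orderOf_pos_iff.1 (hg ▸ mul_pos hp.pos hq.pos)
    exact ⟨hg, eq_or_eq_of_incompRel_dvd_of_dvd_prime_mul_prime hp hq (hg ▸ hxg) (hg ▸ hyg)
      (incompRel_orderOf hfin hx hy h)⟩

theorem isChordal_powerGraph_of_orderOf {p q : ℕ} (hp : p.Prime) (hq : q.Prime)
    (horder : ∀ g : G, (∃ r k, r.Prime ∧ orderOf g = r ^ k) ∨ orderOf g = p * q)
    (hunique : ∀ t g g' : G, orderOf t = p → orderOf g = p * q → orderOf g' = p * q →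
      IsPowerOf t g → IsPowerOf t g' → IsPowerOf g g') :
    IsChordal (powerGraph G) := by
  by_contra h
  obtain ⟨a, b, hab⟩ := exists_alternating_of_not_isChordal_powerGraph h
  choose hleft hright hmin hmax using hab
  have horders (i) := orderOf_eq_of_incompRel_isPowerOf hp hq (horder (b i)) (hleft i) (hright i)
    (hmin i)
  have orderOf_min_ne (i) : orderOf (a (i + 1)) ≠ p := fun hi =>
    (hmax i).1 (hunique _ _ _ hi (horders i).1 (horders (i + 1)).1 (hright i) (hleft (i + 1)))
  rcases (horders 1).2 with ⟨h1, -⟩ | ⟨-, h2⟩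
  · exact orderOf_min_ne 0 h1
  · exact orderOf_min_ne 1 h2

theorem IsPowerOf.eq_pow_of_orderOf_eq_two {t g : G} {m : ℕ} (h : IsPowerOf t g)
    (ht : orderOf t = 2) (hg : orderOf g = 2 * m) (hm : 0 < m) : t = g ^ m := by
  obtain ⟨k, hk, rfl⟩ := h.exists_pow_eq (orderOf_pos_iff.1 (by omega))
  have hdvd : 2 * m ∣ 2 * k := by
    rw [← hg, orderOf_dvd_iff_pow_eq_one, mul_comm, pow_mul, ← ht, pow_orderOf_eq_one]
  obtain ⟨l, rfl⟩ := Nat.dvd_of_mul_dvd_mul_left two_pos hdvd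
  obtain rfl | rfl : l = 0 ∨ l = 1 := by
    have : l < 2 := by nlinarith
    omega
  · simp at ht
  · rw [mul_one]

end PowerGraph

theorem isChordal_powerGraph_perm_of_embedding {α β : Type*} (e : α ↪ β)
    (h : IsChordal (powerGraph (Perm β))) : IsChordal (powerGraph (Perm α)) :=
  h.of_embedding (powerGraphEmbedding (Perm.viaEmbeddingHom e) (Perm.viaEmbeddingHom_injective e))

theorem orderOf_perm_fin_five (g : Perm (Fin 5)) :
    (∃ r k, r.Prime ∧ orderOf g = r ^ k) ∨ orderOf g = 2 * 3 := by
  have hpow : g ^ (2 ^ 2) = 1 ∨ g ^ (5 ^ 1) = 1 ∨ g ^ (2 * 3) = 1 := by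
    revert g
    decide +kernel
  simp only [← orderOf_dvd_iff_pow_eq_one] at hpow
  rcases hpow with h | h | h
  · obtain ⟨k, -, hk⟩ := (Nat.dvd_prime_pow Nat.prime_two).1 h
    exact Or.inl ⟨2, k, Nat.prime_two, hk⟩
  · obtain ⟨k, -, hk⟩ := (Nat.dvd_prime_pow Nat.prime_five).1 h
    exact Or.inl ⟨5, k, Nat.prime_five, hk⟩
  · rcases eq_of_dvd_prime_mul_prime Nat.prime_two Nat.prime_three h with h | h | h | h
    · exact Or.inl ⟨2, 0, Nat.prime_two, h⟩
    · exact Or.inl ⟨2, 1, Nat.prime_two, h⟩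
    · exact Or.inl ⟨3, 1, Nat.prime_three, h⟩
    · exact Or.inr h

theorem perm_fin_five_eq_or_eq_inv_of_pow_three_eq {g g' : Perm (Fin 5)} (hg : orderOf g = 6)
    (hg' : orderOf g' = 6) (h : g ^ 3 = g' ^ 3) : g = g' ∨ g = g'⁻¹ := by
  have hpow {x : Perm (Fin 5)} (hx : orderOf x = 6) : x ^ 6 = 1 ∧ x ^ 3 ≠ 1 ∧ x ^ 2 ≠ 1 := by
    simp only [ne_eq, ← orderOf_dvd_iff_pow_eq_one, hx]
    decide
  have hdecide : ∀ x : Perm (Fin 5), x ^ 6 = 1 ∧ x ^ 3 ≠ 1 ∧ x ^ 2 ≠ 1 →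
      ∀ y : Perm (Fin 5), y ^ 6 = 1 ∧ y ^ 3 ≠ 1 ∧ y ^ 2 ≠ 1 → x ^ 3 = y ^ 3 →
        x = y ∨ x = y⁻¹ := by
    decide +kernel
  exact hdecide g (hpow hg) g' (hpow hg') h

theorem isChordal_powerGraph_perm_fin_five : IsChordal (powerGraph (Perm (Fin 5))) := by
  refine isChordal_powerGraph_of_orderOf Nat.prime_two Nat.prime_three orderOf_perm_fin_five ?_
  intro t g g' ht hg hg' htg htg'
  have hcube : g ^ 3 = g' ^ 3 :=
    (htg.eq_pow_of_orderOf_eq_two ht hg three_pos).symm.trans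
      (htg'.eq_pow_of_orderOf_eq_two ht hg' three_pos)
  rcases perm_fin_five_eq_or_eq_inv_of_pow_three_eq hg hg' hcube with rfl | rfl
  · exact mem_zpowers g
  · exact inv_mem (mem_zpowers g')

/-- An induced `12`-cycle in the power graph of `Sym(6)`: minima of orders `2` and `3` alternate at
the even places, and at each odd place stands the product of the two neighbouring minima. -/
def inducedTwelveCycle : Fin 12 → Perm (Fin 6) :=
  ![c[0, 1], c[0, 1] * c[3, 4, 5], c[3, 4, 5], c[3, 4, 5] * c[0, 2],
    c[0, 2], c[0, 2] * c[1, 4, 5], c[1, 4, 5], c[1, 4, 5] * c[0, 3],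
    c[0, 3], c[0, 3] * c[2, 4, 5], c[2, 4, 5], c[2, 4, 5] * c[0, 1]]

theorem inducedTwelveCycle_injective : Function.Injective inducedTwelveCycle := by
  unfold Function.Injective
  decide +kernel

theorem inducedTwelveCycle_adj_iff (i j : Fin 12) :
    (powerGraph (Perm (Fin 6))).Adj (inducedTwelveCycle i) (inducedTwelveCycle j) ↔
      (SimpleGraph.cycleGraph 12).Adj i j := by
  have hpow : ∀ i, inducedTwelveCycle i ^ 6 = 1 := by decide +kernel
  rw [powerGraph_adj, SymmGen, isPowerOf_iff_of_pow_eq_one (by norm_num) (hpow i),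
    isPowerOf_iff_of_pow_eq_one (by norm_num) (hpow j), inducedTwelveCycle_injective.ne_iff]
  revert i j
  decide +kernel

theorem not_isChordal_powerGraph_perm_fin_six : ¬ IsChordal (powerGraph (Perm (Fin 6))) := fun h =>
  (h 12 (by norm_num)).false
    ⟨⟨inducedTwelveCycle, inducedTwelveCycle_injective⟩, inducedTwelveCycle_adj_iff _ _⟩

theorem stmt3_general (α : Type*) : IsChordal (powerGraph (Perm α)) ↔ ENat.card α ≤ 5 := by
  refine ⟨fun h => ?_, fun hcard => ?_⟩
  · by_contra! hcard
    have hsix : ENat.card (Fin 6) ≤ ENat.card α := by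
      rw [ENat.card_eq_coe_fintype_card, Fintype.card_fin]
      exact Order.add_one_le_of_lt hcard
    obtain ⟨e⟩ := nonempty_embedding_of_enatCard_le hsix
    exact not_isChordal_powerGraph_perm_fin_six (isChordal_powerGraph_perm_of_embedding e h)
  · have : Finite α := ENat.card_lt_top.1 (hcard.trans_lt (ENat.natCast_lt_top 5))
    have hfive : ENat.card α ≤ ENat.card (Fin 5) := by simpa using hcard
    obtain ⟨e⟩ := nonempty_embedding_of_enatCard_le hfive
    exact isChordal_powerGraph_perm_of_embedding e isChordal_powerGraph_perm_fin_five

theorem stmt3 (n : ℕ) :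
    IsChordal (powerGraph (Equiv.Perm (Fin n))) ↔ n ≤ 5 := by
  simpa using stmt3_general (Fin n)
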